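/- arXiv:2505.07795 — 2 statements merged into one kernel-verified Lean document; each statement's English description precedes it below -/
import Mathlib

section
/- Let D_A, D₂, D_C ≥ 1 and k ≥ 1 be integers, and let ψ be a Haar-random unit vector in ℂ^{D_A} ⊗ ℂ^{D₂} ⊗ ℂ^{D_C} (i.e., distributed as U e₁ for U Haar distributed on U(D_A D₂ D_C) and e₁ a fixed unit vector). Fix an orthonormal basis {|α⟩ : α = 1, …, D_C} of ℂ^{D_C}, and for each α set ψ̃_α = (I ⊗ ⟨α|) ψ ∈ ℂ^{D_A} ⊗ ℂ^{D₂} and P_α = ‖ψ̃_α‖². Then the expectation over ψ of the k-th moment of the mixed state projected ensemble equals the k-th moment of the generalized Hilbert–Schmidt ensemble: E_ψ [ Σ_{α : P_α > 0} P_α^{1−k} (Tr_{D₂}(|ψ̃_α⟩⟨ψ̃_α|))^{⊗k} ] = ((D_A D₂ − 1)!/(D_A D₂ + k − 1)!) Σ_{g ∈ S_k} D₂^{l(g)} P_{D_A}(g). -/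
open Matrix MeasureTheory

/-- The Borel σ-algebra on matrices. -/
noncomputable instance matrixMeasurableSpace {m n : Type*} :
    MeasurableSpace (Matrix m n ℂ) := borel _

/-- Number of cycles of a permutation, counting fixed points as cycles of length 1. -/
def cycleCount {k : ℕ} (g : Equiv.Perm (Fin k)) : ℕ :=
  g.cycleType.card + (k - g.support.card)

/-- The permutation operator `P_D(g)` on `(ℂ^D)^{⊗k}`. -/
def permMatrix (D : ℕ) {k : ℕ} (g : Equiv.Perm (Fin k)) :
    Matrix (Fin k → Fin D) (Fin k → Fin D) ℂ :=
  fun r c => if r = fun a => c (g a) then 1 else 0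

/-- The `k`-fold tensor power `M^{⊗k}` of a `D × D` matrix. -/
def tensorPow {D k : ℕ} (M : Matrix (Fin D) (Fin D) ℂ) :
    Matrix (Fin k → Fin D) (Fin k → Fin D) ℂ :=
  fun r c => ∏ a, M (r a) (c a)

/-- The projected (unnormalized) vector `ψ̃_α = (I ⊗ ⟨α|) ψ` on `ℂ^{D_A} ⊗ ℂ^{D₂}`. -/
def projVec {DA D2 DC : ℕ} (ψ : (Fin DA × Fin D2) × Fin DC → ℂ) (α : Fin DC) :
    Fin DA × Fin D2 → ℂ :=
  fun x => ψ (x, α)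

/-- `P_α = ‖ψ̃_α‖²`. -/
noncomputable def bornP {DA D2 : ℕ} (φ : Fin DA × Fin D2 → ℂ) : ℝ :=
  ∑ x, Complex.normSq (φ x)

/-- The partial trace `Tr_{D₂}(|φ⟩⟨φ|)` over the `ℂ^{D₂}` factor of the (unnormalized)
projector onto `φ ∈ ℂ^{D_A} ⊗ ℂ^{D₂}`. -/
noncomputable def ptraceOuter {DA D2 : ℕ} (φ : Fin DA × Fin D2 → ℂ) :
    Matrix (Fin DA) (Fin DA) ℂ :=
  fun i j => ∑ b : Fin D2, φ (i, b) * (starRingEnd ℂ) (φ (j, b))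


/-- The Haar-random pure state `ψ = U e₁`. -/
noncomputable def psiVec {DA D2 DC : ℕ}
    (U : ↥(Matrix.unitaryGroup ((Fin DA × Fin D2) × Fin DC) ℂ))
    (e₁ : (Fin DA × Fin D2) × Fin DC → ℂ) : (Fin DA × Fin D2) × Fin DC → ℂ :=
  (U : Matrix ((Fin DA × Fin D2) × Fin DC) ((Fin DA × Fin D2) × Fin DC) ℂ) *ᵥ e₁

/-!
Write `|v⟩⟨v|^{⊗k}` weighted by `‖v‖^{2(1-k)}` as `W_k(v)` and let `M_k = E[W_k(v)]` for a random
vector `v` of `ℂ^d` with unitarily invariant law. Invariance makes `M_k` commute with `V^{⊗k}` for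
every unitary `V`. Differentiating along one-parameter groups `V = exp(itA)` and complexifying, it
commutes with `∑_a 1 ⊗ ⋯ ⊗ X ⊗ ⋯ ⊗ 1` (`X` in position `a`) for every matrix `X`. Since `W_k(v)` is
supported on the symmetric subspace and its partial trace over one factor is `W_{k-1}(v)`, taking
matrix units for `X` and contracting one factor expresses `(d + k) M_{k+1}` through `M_k`. The
sum of all permutation operators obeys the same recursion without the factor `d + k`, whence
`d (d+1) ⋯ (d+k-1) M_k = E‖v‖² ∑_g P(g)`.

Each projected vector `ψ̃_α` has a unitarily invariant law, because `V ⊗ I` acts on it as `V`. The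
second moments `E‖ψ̃_α‖²` add up to `1`, and tracing out the `k` copies of `ℂ^{D₂}` replaces each
`P(g)` by `D₂^{l(g)} P_{D_A}(g)`.
-/

section KroneckerPower

open Finset

variable {ι n R : Type*} [Fintype ι]

/-- The tensor power `M^{⊗ι}`, acting on `(R^n)^{⊗ι}` with basis indexed by multi-indices `ι → n`;
it agrees with `tensorPow` for `ι = Fin k`. -/
def kroneckerPow [CommMonoid R] (ι : Type*) [Fintype ι] (M : Matrix n n R) :
    Matrix (ι → n) (ι → n) R :=
  of fun i j => ∏ a, M (i a) (j a)

theorem kroneckerPow_mul [CommSemiring R] [Fintype n] [DecidableEq ι] (M N : Matrix n n R) :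
    kroneckerPow ι (M * N) = kroneckerPow ι M * kroneckerPow ι N := by
  ext i j
  simp only [kroneckerPow, of_apply, mul_apply, prod_univ_sum, Fintype.piFinset_univ,
    prod_mul_distrib]

open scoped Matrix.Norms.L2Operator in
theorem hasDerivAt_expUnitary_apply [Fintype n] [DecidableEq n]
    (A : selfAdjoint (Matrix n n ℂ)) (x y : n) :
    HasDerivAt (fun t : ℝ => (selfAdjoint.expUnitary (t • A) : Matrix n n ℂ) x y)
      ((Complex.I • (A : Matrix n n ℂ)) x y) 0 := by
  have h := hasDerivAt_exp_smul_const (𝕂 := ℝ) (Complex.I • (A : Matrix n n ℂ)) 0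
  simp only [zero_smul, NormedSpace.exp_zero, one_mul] at h
  have hentry := (entryLinearMap ℝ ℂ x y).toContinuousLinearMap.hasFDerivAt.comp_hasDerivAt _ h
  refine hentry.congr_of_eventuallyEq (.of_forall fun t => ?_)
  simp [selfAdjoint.expUnitary_coe, smul_comm t Complex.I]

variable [DecidableEq ι] [DecidableEq n]

/-- The Kronecker sum `∑ a, 1 ⊗ ⋯ ⊗ X ⊗ ⋯ ⊗ 1` with `X` in position `a`: the derivative of
`kroneckerPow ι` at the identity in the direction `X`. -/
def kroneckerSum [CommSemiring R] (ι : Type*) [Fintype ι] [DecidableEq ι] :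
    Matrix n n R →ₗ[R] Matrix (ι → n) (ι → n) R where
  toFun X := of fun i j =>
    ∑ a, (∏ b ∈ univ.erase a, (1 : Matrix n n R) (i b) (j b)) * X (i a) (j a)
  map_add' X Y := by
    ext i j
    simp [mul_add, sum_add_distrib]
  map_smul' c X := by
    ext i j
    simp [mul_sum, mul_left_comm]

theorem kroneckerSum_transpose [CommSemiring R] (X : Matrix n n R) :
    kroneckerSum ι Xᵀ = (kroneckerSum ι X)ᵀ := by
  ext i j
  simp [kroneckerSum, one_apply, eq_comm]

theorem prod_erase_one_apply_update [CommSemiring R] (i : ι → n) (a : ι) (z : n) :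
    ∏ b ∈ univ.erase a, (1 : Matrix n n R) (i b) (Function.update i a z b) = 1 :=
  prod_eq_one fun b hb => by rw [Function.update_of_ne (ne_of_mem_erase hb), one_apply_eq]

theorem prod_erase_one_apply_eq_zero [CommSemiring R] {i j : ι → n} {a : ι}
    (h : Function.update i a (j a) ≠ j) :
    ∏ b ∈ univ.erase a, (1 : Matrix n n R) (i b) (j b) = 0 := by
  obtain ⟨b, hb⟩ := Function.ne_iff.mp h
  have hba : b ≠ a := by rintro rfl; simp at hb
  rw [Function.update_of_ne hba] at hb
  exact prod_eq_zero (mem_erase.mpr ⟨hba, mem_univ b⟩) (one_apply_ne hb)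

theorem hasDerivAt_kroneckerPow {𝕜 𝔸 : Type*} [NontriviallyNormedField 𝕜] [NormedCommRing 𝔸]
    [NormedAlgebra 𝕜 𝔸] {V : 𝕜 → Matrix n n 𝔸} {X : Matrix n n 𝔸} {t : 𝕜} (hVt : V t = 1)
    (hV : ∀ x y, HasDerivAt (fun s => V s x y) (X x y) t) (i j : ι → n) :
    HasDerivAt (fun s => kroneckerPow ι (V s) i j) (kroneckerSum ι X i j) t := by
  simpa [kroneckerPow, kroneckerSum, hVt] using
    HasDerivAt.fun_finsetProd (u := univ) fun a _ => hV (i a) (j a)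

variable [Fintype n]

theorem kroneckerSum_mul_apply [CommSemiring R] (X : Matrix n n R) (T : Matrix (ι → n) (ι → n) R)
    (i j : ι → n) :
    (kroneckerSum ι X * T) i j = ∑ a, ∑ z, X (i a) z * T (Function.update i a z) j := by
  simp only [kroneckerSum, LinearMap.coe_mk, AddHom.coe_mk, mul_apply, of_apply, sum_mul]
  rw [sum_comm]
  refine sum_congr rfl fun a _ => (sum_of_injOn (Function.update i a)
    (Function.update_injective i a).injOn (by simp) (fun i' _ hi' => ?_) fun z _ => ?_).symm
  · rw [prod_erase_one_apply_eq_zero fun h => hi' ⟨i' a, by simp, h⟩, zero_mul, zero_mul]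
  · rw [prod_erase_one_apply_update, one_mul, Function.update_self]

theorem mul_kroneckerSum_apply [CommSemiring R] (X : Matrix n n R) (T : Matrix (ι → n) (ι → n) R)
    (i j : ι → n) :
    (T * kroneckerSum ι X) i j = ∑ b, ∑ z, X z (j b) * T i (Function.update j b z) := by
  rw [← transpose_apply (T * _), transpose_mul, ← kroneckerSum_transpose, kroneckerSum_mul_apply]
  rfl

open scoped Matrix.Norms.L2Operator ComplexStarModule in
theorem commute_kroneckerSum_of_unitary {T : Matrix (ι → n) (ι → n) ℂ}
    (hT : ∀ V ∈ unitaryGroup n ℂ, Commute (kroneckerPow ι V) T) (X : Matrix n n ℂ) :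
    Commute (kroneckerSum ι X) T := by
  have hself (A : selfAdjoint (Matrix n n ℂ)) :
      Commute (kroneckerSum ι (Complex.I • (A : Matrix n n ℂ))) T := by
    have hpow := hasDerivAt_kroneckerPow (ι := ι) (by simp) (hasDerivAt_expUnitary_apply A)
    ext i j
    have hleft := HasDerivAt.fun_sum (u := univ) fun l _ => (hpow i l).mul_const (T l j)
    have hright := HasDerivAt.fun_sum (u := univ) fun l _ => (hpow l j).const_mul (T i l)
    refine hleft.unique (hright.congr_of_eventuallyEq (.of_forall fun t => ?_))
    exact congrFun₂ (hT _ (selfAdjoint.expUnitary (t • A)).2) i j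
  have hself' (A : selfAdjoint (Matrix n n ℂ)) : Commute (kroneckerSum ι (A : Matrix n n ℂ)) T := by
    simpa [smul_smul] using (hself A).smul_left (-Complex.I)
  rw [← realPart_add_I_smul_imaginaryPart X, map_add]
  exact (hself' (ℜ X)).add_left (hself (ℑ X))

end KroneckerPower

section SymmetrizerRecursion

open Finset

variable {n R : Type*} {k : ℕ}

theorem cons_comp_swap_succ (i : Fin k → n) (a : Fin k) (x : n) :
    (Fin.cons x i : Fin (k + 1) → n) ∘ Equiv.swap 0 a.succ =
      Function.update (Fin.cons (i a) i) a.succ x := by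
  funext b
  rcases Fin.eq_zero_or_eq_succ b with rfl | ⟨b, rfl⟩
  · simp [Function.update_of_ne (Fin.succ_ne_zero a).symm]
  · rcases eq_or_ne b a with rfl | hb
    · simp
    · have hb' : b.succ ≠ a.succ := by simpa using hb
      simp [Equiv.swap_apply_of_ne_of_ne (Fin.succ_ne_zero b) hb', hb]

theorem update_comp_swap_zero (j : Fin (k + 1) → n) (b : Fin (k + 1)) (y : n) :
    Function.update j b y ∘ Equiv.swap 0 b =
      Fin.cons y fun a : Fin k => j (Equiv.swap 0 b a.succ) := by
  rw [Function.update_comp_equiv, ← Fin.cons_self_tail (j ∘ _)]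
  simp [Fin.tail_def]

variable [DecidableEq n]

theorem sum_apply_update_eq_of_commute {ι : Type*} [Fintype ι] [DecidableEq ι] [Fintype n]
    [CommSemiring R] {T : Matrix (ι → n) (ι → n) R}
    (hT : ∀ X, Commute (kroneckerSum ι X) T) (x y : n) (i j : ι → n) :
    ∑ a, (if i a = y then T (Function.update i a x) j else 0) =
      ∑ b, (if j b = x then T i (Function.update j b y) else 0) := by
  have h := congrFun₂ (hT (single y x 1)).eq i j
  rw [kroneckerSum_mul_apply, mul_kroneckerSum_apply] at h
  simpa [single_apply, ite_and, eq_comm] using h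

theorem card_add_mul_apply_cons [Fintype n] [CommSemiring R]
    {T : Matrix (Fin (k + 1) → n) (Fin (k + 1) → n) R}
    (hT : ∀ X, Commute (kroneckerSum (Fin (k + 1)) X) T)
    (hrow : ∀ i j (g : Equiv.Perm (Fin (k + 1))), T (i ∘ g) j = T i j)
    (hcol : ∀ i j (g : Equiv.Perm (Fin (k + 1))), T i (j ∘ g) = T i j)
    (x : n) (i : Fin k → n) (j : Fin (k + 1) → n) :
    ((Fintype.card n : R) + k) * T (Fin.cons x i) j =
      ∑ b, if j b = x then
        ∑ y, T (Fin.cons y i) (Fin.cons y fun a => j (Equiv.swap 0 b a.succ)) else 0 := by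
  have hswap (a : Fin k) :
      T (Function.update (Fin.cons (i a) i : Fin (k + 1) → n) a.succ x) j = T (Fin.cons x i) j := by
    rw [← cons_comp_swap_succ, hrow]
  calc ((Fintype.card n : R) + k) * T (Fin.cons x i) j
      = ∑ y, ∑ a, if (Fin.cons y i : Fin (k + 1) → n) a = y then
          T (Function.update (Fin.cons y i : Fin (k + 1) → n) a x) j else 0 := by
        simp only [Fin.sum_univ_succ, Fin.cons_zero, Fin.cons_succ, if_true, sum_add_distrib]
        rw [sum_comm (s := univ (α := n))]
        simp [hswap, add_mul]
    _ = ∑ y, ∑ b, if j b = x then T (Fin.cons y i) (Function.update j b y) else 0 :=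
        sum_congr rfl fun y _ => sum_apply_update_eq_of_commute hT x y _ j
    _ = _ := by
        rw [sum_comm]
        refine sum_congr rfl fun b _ => ?_
        simp only [sum_ite_irrel, sum_const_zero, ← update_comp_swap_zero, hcol]

/-- The `(i, j)` entry of `∑ g, P(g)`, the sum of all permutation operators on `k`
tensor factors. -/
def permCount (i j : Fin k → n) : ℕ :=
  #{g : Equiv.Perm (Fin k) | i = j ∘ g}

theorem permCount_fin_zero (i j : Fin 0 → n) : permCount i j = 1 := by
  simp [permCount, eq_iff_true_of_subsingleton]

theorem permCount_cons (x : n) (i : Fin k → n) (j : Fin (k + 1) → n) :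
    permCount (Fin.cons x i) j =
      ∑ b, if j b = x then permCount i fun a => j (Equiv.swap 0 b a.succ) else 0 := by
  have hdecomp (b : Fin (k + 1)) (g : Equiv.Perm (Fin k)) :
      (Fin.cons x i = j ∘ Equiv.Perm.decomposeFin.symm (b, g)) ↔
        j b = x ∧ i = (fun a => j (Equiv.swap 0 b a.succ)) ∘ g := by
    simp [funext_iff, Fin.forall_fin_succ, eq_comm]
  simp only [permCount, card_filter]
  rw [← Equiv.sum_comp Equiv.Perm.decomposeFin.symm, Fintype.sum_prod_type]
  simp [hdecomp, ite_and, sum_ite_irrel]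

end SymmetrizerRecursion

section CycleCount

open Finset Equiv.Perm

variable {α : Type*} (g : Equiv.Perm α)

theorem sameCycle_le_ker_iff {β : Type*} {f : α → β} :
    SameCycle.setoid g ≤ Setoid.ker f ↔ f = f ∘ g := by
  refine ⟨fun h => funext fun x => h (sameCycle_apply_right.mpr (.refl g x)), fun h x y hxy => ?_⟩
  obtain ⟨m, rfl⟩ := hxy
  have hstep (m : ℤ) : f ((g ^ (m + 1)) x) = f ((g ^ m) x) := by
    rw [add_comm, _root_.zpow_one_add, mul_apply]
    exact (congrFun h _).symm
  have hpow : f ((g ^ m) x) = f x := by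
    induction m using Int.induction_on with
    | zero => rfl
    | succ m ih => exact (hstep m).trans ih
    | pred m ih =>
      have hprev := hstep (-m - 1)
      rw [sub_add_cancel] at hprev
      exact hprev.symm.trans ih
  exact hpow.symm

variable [Fintype α] [DecidableEq α]

/-- The cycle of `g` through `x`, where a fixed point is its own cycle: Mathlib's
`cycleFactorsFinset` omits the cycles of length one. -/
def cycleClass (x : α) : g.cycleFactorsFinset ⊕ {x // x ∉ g.support} :=
  if h : x ∈ g.support then .inl ⟨g.cycleOf x, cycleOf_mem_cycleFactorsFinset_iff.mpr h⟩
  else .inr ⟨x, h⟩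

theorem cycleClass_surjective : Function.Surjective (cycleClass g) := by
  rintro (⟨c, hc⟩ | ⟨x, hx⟩)
  · obtain ⟨x, hx⟩ := (mem_cycleFactorsFinset_iff.mp hc).1.nonempty_support
    exact ⟨x, by simp [cycleClass, mem_cycleFactorsFinset_support_le hc hx, cycle_is_cycleOf hx hc,
      -mem_support]⟩
  · exact ⟨x, dif_neg hx⟩

theorem cycleClass_eq_iff_sameCycle {x y : α} :
    cycleClass g x = cycleClass g y ↔ g.SameCycle x y := by
  by_cases hx : x ∈ g.support <;> by_cases hy : y ∈ g.support
  · simp [cycleClass, hx, hy, sameCycle_iff_cycleOf_eq_of_mem_support hx hy, -mem_support]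
  · simpa [cycleClass, hx, hy, -mem_support] using
      fun h : g.SameCycle x y => hy (h.mem_support_iff.mp hx)
  · simpa [cycleClass, hx, hy, -mem_support] using
      fun h : g.SameCycle x y => hx (h.mem_support_iff.mpr hy)
  · have hfix : g.SameCycle x y ↔ x = y :=
      ⟨fun h => h.eq_of_left (notMem_support.mp hx), fun h => h ▸ .refl g x⟩
    simp [cycleClass, hx, hy, hfix, -mem_support]

theorem card_quotient_sameCycle :
    Nat.card (Quotient (SameCycle.setoid g)) =
      g.cycleType.card + (Fintype.card α - #g.support) := by
  have hker : SameCycle.setoid g = Setoid.ker (cycleClass g) :=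
    Setoid.ext fun _ _ => (cycleClass_eq_iff_sameCycle g).symm
  rw [hker, Nat.card_congr (Setoid.quotientKerEquivOfSurjective _ (cycleClass_surjective g)),
    Nat.card_sum]
  simp [cycleType_def, -mem_support, Fintype.card_subtype_compl]

theorem card_filter_eq_comp_perm {β : Type*} [Fintype β] [DecidableEq β] :
    #{f : α → β | f = f ∘ g} =
      Fintype.card β ^ (g.cycleType.card + (Fintype.card α - #g.support)) := by
  rw [← card_quotient_sameCycle, ← Nat.card_eq_fintype_card (α := β), ← Nat.card_fun,
    ← Nat.card_congr (Setoid.liftEquiv _), ← Fintype.card_subtype, ← Nat.card_eq_fintype_card]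
  simp only [sameCycle_le_ker_iff]

end CycleCount

section UnitarilyInvariant

open Finset

variable {n : Type*} [Fintype n]

/-- The squared Euclidean norm; the norm that Mathlib puts on `n → ℂ` is the sup norm. -/
noncomputable def sqNorm (v : n → ℂ) : ℝ :=
  ∑ x, Complex.normSq (v x)

theorem sqNorm_nonneg (v : n → ℂ) : 0 ≤ sqNorm v :=
  sum_nonneg fun x _ => Complex.normSq_nonneg (v x)

theorem sqNorm_eq_zero {v : n → ℂ} : sqNorm v = 0 ↔ v = 0 := by
  simp [sqNorm, sum_eq_zero_iff_of_nonneg, Complex.normSq_nonneg, funext_iff]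

theorem ofReal_sqNorm (v : n → ℂ) : (sqNorm v : ℂ) = star v ⬝ᵥ v := by
  simp [sqNorm, dotProduct, Complex.normSq_eq_conj_mul_self]

theorem norm_sq_le_sqNorm (v : n → ℂ) (x : n) : ‖v x‖ ^ 2 ≤ sqNorm v := by
  rw [← Complex.normSq_eq_norm_sq]
  exact single_le_sum (f := fun x => Complex.normSq (v x))
    (fun x _ => Complex.normSq_nonneg (v x)) (mem_univ x)

theorem continuous_sqNorm : Continuous (sqNorm : (n → ℂ) → ℝ) :=
  continuous_finsetSum _ fun x _ => Complex.continuous_normSq.comp (continuous_apply x)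

theorem sqNorm_mulVec [DecidableEq n] {V : Matrix n n ℂ} (hV : V ∈ unitaryGroup n ℂ) (v : n → ℂ) :
    sqNorm (V *ᵥ v) = sqNorm v := by
  apply Complex.ofReal_injective
  rw [ofReal_sqNorm, ofReal_sqNorm, star_mulVec, dotProduct_mulVec, vecMul_vecMul,
    ← star_eq_conjTranspose, mem_unitaryGroup_iff'.mp hV, vecMul_one]

theorem sqNorm_eq_sum_slice {m : Type*} [Fintype m] (ψ : n × m → ℂ) :
    sqNorm ψ = ∑ α, sqNorm fun x => ψ (x, α) :=
  Fintype.sum_prod_type_right _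

variable (k : ℕ)

/-- The operator `P^{1-k} (|v⟩⟨v|)^{⊗k}` with `P = ‖v‖²`, whose mean is the `k`-th moment of a
projected ensemble. At `v = 0` it is `0` for every `k`, so outcomes of probability zero do not
contribute. -/
noncomputable def weightedProjector (v : n → ℂ) : Matrix (Fin k → n) (Fin k → n) ℂ :=
  (sqNorm v : ℂ) ^ (1 - k : ℤ) • kroneckerPow (Fin k) (vecMulVec v (star v))

variable {k} in
theorem weightedProjector_apply (v : n → ℂ) (i j : Fin k → n) :
    weightedProjector k v i j =
      (sqNorm v : ℂ) ^ (1 - k : ℤ) * ∏ a, v (i a) * star (v (j a)) :=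
  rfl

theorem weightedProjector_zero : weightedProjector k (0 : n → ℂ) = 0 := by
  ext i j
  rcases k with _ | k <;> simp [weightedProjector_apply, sqNorm]

variable {k}

theorem norm_weightedProjector_apply_le (v : n → ℂ) (i j : Fin k → n) :
    ‖weightedProjector k v i j‖ ≤ sqNorm v := by
  rcases (sqNorm_nonneg v).eq_or_lt' with hv | hv
  · simp [sqNorm_eq_zero.mp hv, weightedProjector_zero, sqNorm_nonneg]
  have hentry (x y : n) : ‖v x * star (v y)‖ ≤ sqNorm v := by
    rw [norm_mul, norm_star]
    linarith [two_mul_le_add_sq ‖v x‖ ‖v y‖, norm_sq_le_sqNorm v x, norm_sq_le_sqNorm v y]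
  calc ‖weightedProjector k v i j‖
      = sqNorm v ^ (1 - k : ℤ) * ∏ a, ‖v (i a) * star (v (j a))‖ := by
        rw [weightedProjector_apply, norm_mul, norm_zpow, Complex.norm_real,
          Real.norm_of_nonneg hv.le, norm_prod]
    _ ≤ sqNorm v ^ (1 - k : ℤ) * ∏ _a : Fin k, sqNorm v := by
        gcongr
        exact hentry _ _
    _ = sqNorm v := by
        rw [prod_const, card_univ, Fintype.card_fin, ← zpow_natCast, ← zpow_add₀ hv.ne',
          sub_add_cancel, zpow_one]

theorem sum_weightedProjector_cons (v : n → ℂ) (i j : Fin k → n) :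
    ∑ y, weightedProjector (k + 1) v (Fin.cons y i) (Fin.cons y j) = weightedProjector k v i j := by
  rcases eq_or_ne v 0 with rfl | hv
  · simp [weightedProjector_zero]
  have hP : (sqNorm v : ℂ) ≠ 0 := by simpa [sqNorm_eq_zero]
  have htrace : ∑ y, v y * star (v y) = sqNorm v := by
    rw [ofReal_sqNorm, dotProduct_comm]
    rfl
  simp only [weightedProjector_apply, Fin.prod_univ_succ, Fin.cons_zero, Fin.cons_succ]
  rw [← mul_sum, ← sum_mul, htrace, ← mul_assoc, ← zpow_add_one₀ hP]
  congr 2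
  push_cast
  ring

theorem semiconjBy_kroneckerPow_weightedProjector [DecidableEq n] {V : Matrix n n ℂ}
    (hV : V ∈ unitaryGroup n ℂ) (v : n → ℂ) :
    SemiconjBy (kroneckerPow (Fin k) V) (weightedProjector k v) (weightedProjector k (V *ᵥ v)) := by
  rw [SemiconjBy, weightedProjector, weightedProjector, sqNorm_mulVec hV, Matrix.mul_smul,
    Matrix.smul_mul,
    ← kroneckerPow_mul, ← kroneckerPow_mul, mul_vecMulVec, vecMulVec_mul, star_mulVec,
    vecMul_vecMul, ← star_eq_conjTranspose, mem_unitaryGroup_iff'.mp hV, vecMul_one]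

theorem weightedProjector_comp_perm_left (v : n → ℂ) (i j : Fin k → n)
    (g : Equiv.Perm (Fin k)) : weightedProjector k v (i ∘ g) j = weightedProjector k v i j := by
  simp only [weightedProjector_apply, prod_mul_distrib, Function.comp_apply]
  rw [Equiv.prod_comp g fun a => v (i a)]

theorem weightedProjector_comp_perm_right (v : n → ℂ) (i j : Fin k → n)
    (g : Equiv.Perm (Fin k)) : weightedProjector k v i (j ∘ g) = weightedProjector k v i j := by
  simp only [weightedProjector_apply, prod_mul_distrib, Function.comp_apply]
  rw [Equiv.prod_comp g fun a => star (v (j a))]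

theorem measurable_weightedProjector_apply (i j : Fin k → n) :
    Measurable fun v : n → ℂ => weightedProjector k v i j := by
  simp only [weightedProjector_apply]
  have hprod : Continuous fun v : n → ℂ => ∏ a, v (i a) * star (v (j a)) := by fun_prop
  exact ((Complex.measurable_ofReal.comp continuous_sqNorm.measurable).pow_const _).mul
    hprod.measurable

variable {ν : Measure (n → ℂ)}

theorem integrable_weightedProjector_apply (hsq : Integrable sqNorm ν) (i j : Fin k → n) :
    Integrable (fun v => weightedProjector k v i j) ν :=
  hsq.mono' (measurable_weightedProjector_apply i j).aestronglyMeasurable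
    (.of_forall fun v => norm_weightedProjector_apply_le v i j)

/-- Invariance of the law of a random vector under the unitary group. -/
def UnitarilyInvariant [DecidableEq n] (ν : Measure (n → ℂ)) : Prop :=
  ∀ V ∈ unitaryGroup n ℂ, ν.map (V *ᵥ ·) = ν

/-- The entrywise mean of `weightedProjector k v` for `v` distributed as `ν`. -/
noncomputable def momentMatrix (k : ℕ) (ν : Measure (n → ℂ)) :
    Matrix (Fin k → n) (Fin k → n) ℂ :=
  of fun i j => ∫ v, weightedProjector k v i j ∂ν

theorem measurable_mulVec (V : Matrix n n ℂ) : Measurable fun v : n → ℂ => V *ᵥ v :=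
  (continuous_const.matrix_mulVec continuous_id).measurable

theorem integral_mul_weightedProjector_apply (hsq : Integrable sqNorm ν)
    (A : Matrix (Fin k → n) (Fin k → n) ℂ) (i j : Fin k → n) :
    ∫ v, (A * weightedProjector k v) i j ∂ν = (A * momentMatrix k ν) i j := by
  simp only [mul_apply, momentMatrix, of_apply, ← integral_const_mul]
  exact integral_finsetSum _ fun l _ =>
    (integrable_weightedProjector_apply hsq l j).const_mul (A i l)

theorem integral_weightedProjector_mul_apply (hsq : Integrable sqNorm ν)
    (A : Matrix (Fin k → n) (Fin k → n) ℂ) (i j : Fin k → n) :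
    ∫ v, (weightedProjector k v * A) i j ∂ν = (momentMatrix k ν * A) i j := by
  simp only [mul_apply, momentMatrix, of_apply, ← integral_mul_const]
  exact integral_finsetSum _ fun l _ =>
    (integrable_weightedProjector_apply hsq i l).mul_const (A l j)

theorem measurable_weightedProjector_mul_apply (A : Matrix (Fin k → n) (Fin k → n) ℂ)
    (i j : Fin k → n) : Measurable fun v : n → ℂ => (weightedProjector k v * A) i j := by
  simp only [mul_apply]
  exact Finset.measurable_fun_sum _ fun l _ =>
    (measurable_weightedProjector_apply i l).mul_const (A l j)

theorem sum_momentMatrix_cons (hsq : Integrable sqNorm ν) (i j : Fin k → n) :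
    ∑ y, momentMatrix (k + 1) ν (Fin.cons y i) (Fin.cons y j) = momentMatrix k ν i j := by
  simp only [momentMatrix, of_apply]
  rw [← integral_finsetSum _ fun y _ => integrable_weightedProjector_apply hsq _ _]
  simp only [sum_weightedProjector_cons]

theorem blockDiagonal_const_mulVec_apply {m : Type*} [Fintype m] [DecidableEq m]
    (V : Matrix n n ℂ) (ψ : n × m → ℂ) (x : n) (α : m) :
    (blockDiagonal (fun _ => V) *ᵥ ψ) (x, α) = (V *ᵥ fun y => ψ (y, α)) x := by
  simp [mulVec, dotProduct, Fintype.sum_prod_type, blockDiagonal_apply]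

theorem measurable_slice {n m : Type*} (α : m) :
    Measurable fun (ψ : n × m → ℂ) x => ψ (x, α) :=
  measurable_pi_lambda _ fun x => measurable_pi_apply (x, α)

theorem integrable_sqNorm_slice {m : Type*} [Fintype m] {ρ : Measure (n × m → ℂ)}
    (hsq : Integrable sqNorm ρ) (α : m) : Integrable (fun ψ => sqNorm fun x => ψ (x, α)) ρ := by
  refine hsq.mono' (continuous_sqNorm.measurable.comp (measurable_slice α)).aestronglyMeasurable
    (.of_forall fun ψ => ?_)
  rw [Real.norm_of_nonneg (sqNorm_nonneg _), sqNorm_eq_sum_slice ψ]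
  exact single_le_sum (f := fun α => sqNorm fun x => ψ (x, α)) (fun _ _ => sqNorm_nonneg _)
    (mem_univ α)

theorem integrable_weightedProjector_slice_apply {m : Type*} [Fintype m]
    {ρ : Measure (n × m → ℂ)} (hsq : Integrable sqNorm ρ) (α : m) (i j : Fin k → n) :
    Integrable (fun ψ => weightedProjector k (fun x => ψ (x, α)) i j) ρ :=
  (integrable_sqNorm_slice hsq α).mono'
    ((measurable_weightedProjector_apply i j).comp (measurable_slice α)).aestronglyMeasurable
    (.of_forall fun _ => norm_weightedProjector_apply_le _ i j)

variable [DecidableEq n]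

theorem UnitarilyInvariant.commute_momentMatrix (hν : UnitarilyInvariant ν)
    (hsq : Integrable sqNorm ν) {V : Matrix n n ℂ} (hV : V ∈ unitaryGroup n ℂ) :
    Commute (kroneckerPow (Fin k) V) (momentMatrix k ν) := by
  ext i j
  calc (kroneckerPow (Fin k) V * momentMatrix k ν) i j
      = ∫ v, (kroneckerPow (Fin k) V * weightedProjector k v) i j ∂ν :=
        (integral_mul_weightedProjector_apply hsq _ i j).symm
    _ = ∫ v, (weightedProjector k (V *ᵥ v) * kroneckerPow (Fin k) V) i j ∂ν := by
        simp only [(semiconjBy_kroneckerPow_weightedProjector hV _).eq]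
    _ = ∫ v, (weightedProjector k v * kroneckerPow (Fin k) V) i j ∂ν.map (V *ᵥ ·) :=
        (integral_map (measurable_mulVec V).aemeasurable
          (measurable_weightedProjector_mul_apply _ i j).aestronglyMeasurable).symm
    _ = (momentMatrix k ν * kroneckerPow (Fin k) V) i j := by
        rw [hν V hV, integral_weightedProjector_mul_apply hsq]

theorem UnitarilyInvariant.ascFactorial_mul_momentMatrix_apply (hν : UnitarilyInvariant ν)
    (hsq : Integrable sqNorm ν) (i j : Fin k → n) :
    ((Fintype.card n).ascFactorial k : ℂ) * momentMatrix k ν i j =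
      (∫ v, (sqNorm v : ℂ) ∂ν) * permCount i j := by
  induction k with
  | zero => simp [momentMatrix, weightedProjector_apply, permCount_fin_zero]
  | succ k ih =>
    have hrec := card_add_mul_apply_cons
      (commute_kroneckerSum_of_unitary fun V hV => hν.commute_momentMatrix (k := k + 1) hsq hV)
      (by simp [momentMatrix, weightedProjector_comp_perm_left])
      (by simp [momentMatrix, weightedProjector_comp_perm_right]) (i 0) (Fin.tail i) j
    simp only [sum_momentMatrix_cons hsq] at hrec
    rw [← Fin.cons_self_tail i, permCount_cons, Nat.ascFactorial_succ, Nat.cast_mul,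
      Nat.cast_add, mul_comm (_ + _), mul_assoc, hrec, mul_sum, Nat.cast_sum, mul_sum]
    refine sum_congr rfl fun b _ => ?_
    split_ifs
    · exact ih _ _
    · simp

theorem blockDiagonal_const_mem_unitaryGroup {m : Type*} [Fintype m] [DecidableEq m]
    {V : Matrix n n ℂ} (hV : V ∈ unitaryGroup n ℂ) :
    blockDiagonal (fun _ : m => V) ∈ unitaryGroup (n × m) ℂ := by
  rw [mem_unitaryGroup_iff, star_eq_conjTranspose, blockDiagonal_conjTranspose,
    ← blockDiagonal_mul]
  simp only [← star_eq_conjTranspose, mem_unitaryGroup_iff.mp hV]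
  exact blockDiagonal_one

theorem UnitarilyInvariant.map_slice {m : Type*} [Fintype m] [DecidableEq m]
    {ρ : Measure (n × m → ℂ)} (hρ : UnitarilyInvariant ρ) (α : m) :
    UnitarilyInvariant (ρ.map fun ψ x => ψ (x, α)) := by
  intro V hV
  conv_rhs => rw [← hρ _ (blockDiagonal_const_mem_unitaryGroup hV)]
  rw [Measure.map_map (measurable_mulVec V) (measurable_slice α),
    Measure.map_map (measurable_slice α) (measurable_mulVec _)]
  congr 1
  funext ψ x
  exact (blockDiagonal_const_mulVec_apply V ψ x α).symm

theorem UnitarilyInvariant.ascFactorial_mul_integral_sum_slice {m : Type*} [Fintype m]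
    [DecidableEq m] {ρ : Measure (n × m → ℂ)} (hρ : UnitarilyInvariant ρ)
    (hsq : Integrable sqNorm ρ) (i j : Fin k → n) :
    ((Fintype.card n).ascFactorial k : ℂ) *
        ∫ ψ, ∑ α, weightedProjector k (fun x => ψ (x, α)) i j ∂ρ =
      (∫ ψ, (sqNorm ψ : ℂ) ∂ρ) * permCount i j := by
  have hslice (α : m) : ((Fintype.card n).ascFactorial k : ℂ) *
        ∫ ψ, weightedProjector k (fun x => ψ (x, α)) i j ∂ρ =
      (∫ ψ, (sqNorm fun x => ψ (x, α) : ℂ) ∂ρ) * permCount i j := by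
    have hslice_sq : Integrable sqNorm (ρ.map fun ψ x => ψ (x, α)) :=
      (integrable_map_measure continuous_sqNorm.measurable.aestronglyMeasurable
        (measurable_slice α).aemeasurable).mpr (integrable_sqNorm_slice hsq α)
    have h := (hρ.map_slice α).ascFactorial_mul_momentMatrix_apply hslice_sq i j
    have hmeas : Measurable fun v : n → ℂ => (sqNorm v : ℂ) :=
      Complex.measurable_ofReal.comp continuous_sqNorm.measurable
    rwa [momentMatrix, of_apply, integral_map (measurable_slice α).aemeasurable
        (measurable_weightedProjector_apply i j).aestronglyMeasurable,
      integral_map (measurable_slice α).aemeasurable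
        hmeas.aestronglyMeasurable] at h
  rw [integral_finsetSum _ fun α _ => integrable_weightedProjector_slice_apply hsq α i j, mul_sum,
    sum_congr rfl fun α _ => hslice α, ← sum_mul,
    ← integral_finsetSum _ fun α _ => (integrable_sqNorm_slice hsq α).ofReal]
  simp only [sqNorm_eq_sum_slice (n := n) (m := m), Complex.ofReal_sum]

end UnitarilyInvariant

section HaarState

variable {n m : Type*} [Fintype n] [DecidableEq n] [Fintype m] [DecidableEq m] {k : ℕ}

instance : BorelSpace (Matrix n n ℂ) := ⟨rfl⟩

theorem measurable_unitary_mulVec (e : n → ℂ) :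
    Measurable fun U : unitaryGroup n ℂ => (U : Matrix n n ℂ) *ᵥ e :=
  (continuous_subtype_val.matrix_mulVec continuous_const).measurable

theorem unitarilyInvariant_map_mulVec {μ : Measure (unitaryGroup n ℂ)}
    (hμ : ∀ V : unitaryGroup n ℂ, μ.map (fun U => V * U) = μ) (e : n → ℂ) :
    UnitarilyInvariant (μ.map fun U : unitaryGroup n ℂ => (U : Matrix n n ℂ) *ᵥ e) := by
  intro V hV
  conv_rhs => rw [← hμ ⟨V, hV⟩]
  have hmul : Measurable fun U : unitaryGroup n ℂ => ⟨V, hV⟩ * U :=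
    (continuous_const.mul continuous_id).measurable
  rw [Measure.map_map (measurable_mulVec V) (measurable_unitary_mulVec e),
    Measure.map_map (measurable_unitary_mulVec e) hmul]
  congr 1
  funext U
  exact mulVec_mulVec _ _ _

theorem integrable_sqNorm_map_mulVec (μ : Measure (unitaryGroup n ℂ)) [IsFiniteMeasure μ]
    (e : n → ℂ) :
    Integrable sqNorm (μ.map fun U : unitaryGroup n ℂ => (U : Matrix n n ℂ) *ᵥ e) := by
  rw [integrable_map_measure continuous_sqNorm.measurable.aestronglyMeasurable
    (measurable_unitary_mulVec e).aemeasurable]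
  simp only [Function.comp_def, sqNorm_mulVec (Subtype.prop _)]
  exact integrable_const _

theorem integrable_weightedProjector_slice_mulVec (μ : Measure (unitaryGroup (n × m) ℂ))
    [IsFiniteMeasure μ] (e : n × m → ℂ) (α : m) (i j : Fin k → n) :
    Integrable (fun U : unitaryGroup (n × m) ℂ =>
      weightedProjector k (fun x => ((U : Matrix (n × m) (n × m) ℂ) *ᵥ e) (x, α)) i j) μ :=
  have hsq := integrable_sqNorm_map_mulVec μ e
  (integrable_weightedProjector_slice_apply hsq α i j).comp_measurable
    (measurable_unitary_mulVec e)

theorem ascFactorial_mul_integral_sum_slice_mulVec {μ : Measure (unitaryGroup (n × m) ℂ)}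
    [IsProbabilityMeasure μ] (hμ : ∀ V : unitaryGroup (n × m) ℂ, μ.map (fun U => V * U) = μ)
    (e : n × m → ℂ) (i j : Fin k → n) :
    ((Fintype.card n).ascFactorial k : ℂ) * ∫ U : unitaryGroup (n × m) ℂ, ∑ α,
        weightedProjector k (fun x => ((U : Matrix (n × m) (n × m) ℂ) *ᵥ e) (x, α)) i j ∂μ =
      sqNorm e * permCount i j := by
  have h := (unitarilyInvariant_map_mulVec hμ e).ascFactorial_mul_integral_sum_slice
    (integrable_sqNorm_map_mulVec μ e) i j
  have hsum : Measurable fun ψ : n × m → ℂ =>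
      ∑ α, weightedProjector k (fun x => ψ (x, α)) i j :=
    Finset.measurable_fun_sum _ fun α _ =>
      (measurable_weightedProjector_apply i j).comp (measurable_slice α)
  have hsqNorm : Measurable fun ψ : n × m → ℂ => (sqNorm ψ : ℂ) :=
    Complex.measurable_ofReal.comp continuous_sqNorm.measurable
  rw [integral_map (measurable_unitary_mulVec e).aemeasurable hsum.aestronglyMeasurable,
    integral_map (measurable_unitary_mulVec e).aemeasurable hsqNorm.aestronglyMeasurable] at h
  simpa only [sqNorm_mulVec (Subtype.prop _), integral_const, probReal_univ, one_smul] using h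

end HaarState

section ProjectedEnsemble

open Finset

variable {DA D2 DC k : ℕ}

theorem bornP_zpow_mul_tensorPow_ptraceOuter (φ : Fin DA × Fin D2 → ℂ) (r c : Fin k → Fin DA) :
    (bornP φ : ℂ) ^ (1 - k : ℤ) * tensorPow (ptraceOuter φ) r c =
      ∑ b : Fin k → Fin D2,
        weightedProjector k φ (fun a => (r a, b a)) fun a => (c a, b a) := by
  simp only [tensorPow, ptraceOuter, prod_univ_sum, Fintype.piFinset_univ, mul_sum]
  rfl

theorem sum_filter_bornP_pos (ψ : (Fin DA × Fin D2) × Fin DC → ℂ) (r c : Fin k → Fin DA) :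
    ∑ α with 0 < bornP (projVec ψ α),
        (bornP (projVec ψ α) : ℂ) ^ (1 - k : ℤ) * tensorPow (ptraceOuter (projVec ψ α)) r c =
      ∑ b : Fin k → Fin D2, ∑ α,
        weightedProjector k (fun x => ψ (x, α)) (fun a => (r a, b a)) fun a => (c a, b a) := by
  rw [sum_comm, sum_filter_of_ne]
  · exact sum_congr rfl fun α _ => bornP_zpow_mul_tensorPow_ptraceOuter _ r c
  · intro α _ hne
    refine (sqNorm_nonneg (projVec ψ α)).lt_of_ne' fun hzero => hne ?_
    rw [bornP_zpow_mul_tensorPow_ptraceOuter, sqNorm_eq_zero.mp hzero]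
    simp [weightedProjector_zero]

theorem sum_permCount_prodMk (r c : Fin k → Fin DA) :
    ∑ b : Fin k → Fin D2, (permCount (fun a => (r a, b a)) fun a => (c a, b a) : ℂ) =
      (∑ g : Equiv.Perm (Fin k), (D2 : ℂ) ^ cycleCount g • permMatrix DA g) r c := by
  have hpair (b : Fin k → Fin D2) (g : Equiv.Perm (Fin k)) :
      ((fun a => (r a, b a)) = (fun a => (c a, b a)) ∘ g) ↔ (r = fun a => c (g a)) ∧ b = b ∘ g := by
    simp [funext_iff, forall_and]
  have hfixed (g : Equiv.Perm (Fin k)) : #{b : Fin k → Fin D2 | b = b ∘ g} = D2 ^ cycleCount g := by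
    simpa [cycleCount] using card_filter_eq_comp_perm g (β := Fin D2)
  simp only [permCount, hpair, ← sum_boole, Matrix.sum_apply, Matrix.smul_apply, permMatrix]
  rw [sum_comm]
  refine sum_congr rfl fun g _ => ?_
  by_cases hr : r = fun a => c (g a)
  · simp [← hr, hfixed]
  · simp [hr]

theorem eq_factorial_div_factorial_mul {K : Type*} [Field K] [CharZero K] {d : ℕ} (hd : 0 < d)
    {x y : K} (h : (d.ascFactorial k : K) * x = y) :
    x = ((d - 1).factorial : K) / (d + k - 1).factorial * y := by
  have hne : ((d + k - 1).factorial : K) ≠ 0 := mod_cast Nat.factorial_ne_zero _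
  rw [div_mul_eq_mul_div, eq_div_iff hne, ← Nat.factorial_mul_ascFactorial' d k hd, Nat.cast_mul,
    ← h]
  ring

end ProjectedEnsemble

/-- For a Haar-random pure state `ψ = U e₁` on `ℂ^{D_A} ⊗ ℂ^{D₂} ⊗ ℂ^{D_C}` (with `μ` the
normalized Haar, i.e. left-invariant, probability measure on the unitary group and `e₁` a
fixed unit vector), the expected `k`-th moment of the mixed state projected ensemble
`E_ψ [ Σ_{α : P_α > 0} P_α^{1−k} (Tr_{D₂}(|ψ̃_α⟩⟨ψ̃_α|))^{⊗k} ]` equals the `k`-th moment of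
the generalized Hilbert–Schmidt ensemble
`((D_A D₂ − 1)!/(D_A D₂ + k − 1)!) Σ_{g ∈ S_k} D₂^{l(g)} P_{D_A}(g)`. -/
theorem mspe_haar_moment (DA D2 DC k : ℕ)
    (hDA : 1 ≤ DA) (hD2 : 1 ≤ D2) (hDC : 1 ≤ DC) (hk : 1 ≤ k)
    (μ : Measure ↥(Matrix.unitaryGroup ((Fin DA × Fin D2) × Fin DC) ℂ))
    [IsProbabilityMeasure μ]
    (hμ : ∀ V : ↥(Matrix.unitaryGroup ((Fin DA × Fin D2) × Fin DC) ℂ),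
      μ.map (fun U => V * U) = μ)
    (e₁ : (Fin DA × Fin D2) × Fin DC → ℂ) (he : star e₁ ⬝ᵥ e₁ = 1) :
    ∀ r c : Fin k → Fin DA,
      (∫ U : ↥(Matrix.unitaryGroup ((Fin DA × Fin D2) × Fin DC) ℂ),
          ∑ α ∈ Finset.univ.filter
              (fun α : Fin DC =>
                0 < bornP (projVec (psiVec U e₁) α)),
            ((bornP (projVec (psiVec U e₁) α) : ℂ) ^ ((1 : ℤ) - (k : ℤ))) *
              tensorPow (k := k) (ptraceOuter (projVec (psiVec U e₁) α)) r c ∂μ)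
        = (((DA * D2 - 1).factorial : ℂ) / ((DA * D2 + k - 1).factorial : ℂ)) *
            (∑ g : Equiv.Perm (Fin k), (D2 : ℂ) ^ cycleCount g • permMatrix DA g) r c := by
  intro r c
  apply eq_factorial_div_factorial_mul (Nat.mul_pos hDA hD2)
  have hsqNorm : (sqNorm e₁ : ℂ) = 1 := (ofReal_sqNorm e₁).trans he
  simp only [sum_filter_bornP_pos]
  unfold psiVec
  rw [integral_finsetSum _ fun b _ => integrable_finsetSum _ fun α _ =>
      integrable_weightedProjector_slice_mulVec μ e₁ α _ _,
    Finset.mul_sum, ← sum_permCount_prodMk]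
  refine Finset.sum_congr rfl fun b _ => ?_
  simpa [hsqNorm] using ascFactorial_mul_integral_sum_slice_mulVec hμ e₁
    (fun a => (r a, b a)) fun a => (c a, b a)
end

section
/- (Lévy's lemma) Let D ≥ 1, let S^{2D−1} denote the unit sphere in ℝ^{2D} equipped with the uniform (rotation-invariant) probability measure σ, and let f : S^{2D−1} → ℝ be a function that is Lipschitz with constant η > 0 with respect to the Euclidean distance. Then for every ε > 0, σ({ v ∈ S^{2D−1} : |f(v) − ∫ f dσ| ≥ ε }) ≤ 2 exp(−2Dε²/(9π³η²)). -/
open MeasureTheory Metric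

/-!
Two independent standard Gaussian vectors `x`, `y` have the same joint law after any rotation of
the pair. Cutting the quarter turn from `x` to `y` into `N` equal steps and applying convexity of
`exp` to the resulting telescoping sum bounds `𝔼 exp (F y - F x)` by the exponential moment of `N`
times a single step, which tends to `𝔼 exp (π / 2 * fderiv ℝ F x y)` as `N → ∞`. Conditionally on
`x` this is the exponential moment of a centred Gaussian, so a `K`-Lipschitz function is
sub-Gaussian around its mean with variance proxy `(π / 2 * K) ^ 2` (Maurey–Pisier).

If `x` is standard Gaussian and `v` is an independent uniform point of the sphere, then `‖x‖ • v` is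
standard Gaussian. Extending a Lipschitz function on the sphere to be positively homogeneous of
degree one and averaging over `‖x‖` transfers the estimate to the sphere, rescaled by
`𝔼 ‖x‖ ≥ √(2 * n / π)` in dimension `n`.
-/

section Concentration

open ProbabilityTheory Real Filter
open scoped NNReal ENNReal Topology RealInnerProductSpace

section SubGaussian

variable {α β : Type*} [MeasurableSpace α] [MeasurableSpace β]

theorem measureReal_le_abs_le_of_hasSubgaussianMGF {μ : Measure α} {X : α → ℝ} {c : ℝ≥0}
    (h : HasSubgaussianMGF X c μ) {ε : ℝ} (hε : 0 ≤ ε) :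
    μ.real {a | ε ≤ |X a|} ≤ 2 * exp (-ε ^ 2 / (2 * c)) := by
  have hunion : {a | ε ≤ |X a|} = {a | ε ≤ X a} ∪ {a | ε ≤ (-X) a} := by
    ext a
    exact le_abs (a := ε) (b := X a)
  rw [hunion, two_mul]
  exact (measureReal_union_le _ _).trans (add_le_add (h.measure_ge_le hε) (h.neg.measure_ge_le hε))

theorem hasSubgaussianMGF_integral_fst {μ : Measure α} {ν : Measure β} [IsProbabilityMeasure μ]
    [SFinite ν] {X : α × β → ℝ} {c : ℝ≥0} (h : HasSubgaussianMGF X c (μ.prod ν)) :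
    HasSubgaussianMGF (fun b ↦ ∫ a, X (a, b) ∂μ) c ν := by
  have hexp (t : ℝ) := h.integrable_exp_mul t
  have hjensen (t : ℝ) : ∀ᵐ b ∂ν, exp (t * ∫ a, X (a, b) ∂μ) ≤ ∫ a, exp (t * X (a, b)) ∂μ := by
    filter_upwards [(hexp t).prod_left_ae, h.integrable.prod_left_ae] with b hb hXb
    rw [← integral_const_mul]
    exact convexOn_exp.map_integral_le continuousOn_exp isClosed_univ
      (.of_forall fun _ ↦ Set.mem_univ _) (hXb.const_mul t) hb
  refine ⟨fun t ↦ (hexp t).integral_prod_right.mono' ?_ ?_, fun t ↦ ?_⟩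
  · exact continuous_exp.comp_aestronglyMeasurable
      (h.integrable.integral_prod_right.1.const_mul t)
  · filter_upwards [hjensen t] with b hb
    rwa [norm_of_nonneg (exp_pos _).le]
  · calc mgf (fun b ↦ ∫ a, X (a, b) ∂μ) ν t
        ≤ ∫ b, ∫ a, exp (t * X (a, b)) ∂μ ∂ν :=
          integral_mono_of_nonneg (.of_forall fun _ ↦ (exp_pos _).le)
            (hexp t).integral_prod_right (hjensen t)
      _ = mgf X (μ.prod ν) t := (integral_prod_symm _ (hexp t)).symm
      _ ≤ exp (c * t ^ 2 / 2) := h.mgf_le t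

end SubGaussian

section RotationQuotient

variable {E : Type*} [NormedAddCommGroup E] [NormedSpace ℝ E] {K : ℝ≥0} {F : E → ℝ}

theorem rotation_rotation_apply (θ φ : ℝ) (p : E × E) :
    ContinuousLinearMap.rotation θ (ContinuousLinearMap.rotation φ p) =
      ContinuousLinearMap.rotation (θ + φ) p := by
  simp only [ContinuousLinearMap.rotation_apply, cos_add, sin_add]
  ext <;> dsimp only <;> module

theorem rotation_zero_apply (p : E × E) : ContinuousLinearMap.rotation 0 p = p := by
  simp [ContinuousLinearMap.rotation_apply]

theorem norm_fst_rotation_sub_le (θ : ℝ) (p : E × E) :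
    ‖(ContinuousLinearMap.rotation θ p).1 - p.1‖ ≤ 2 * |θ| * ‖p‖ := by
  have hcos : |cos θ - 1| ≤ |θ| := by simpa using abs_cos_sub_cos_le θ 0
  have hsin : |sin θ| ≤ |θ| := abs_sin_le_abs
  calc ‖(ContinuousLinearMap.rotation θ p).1 - p.1‖
      = ‖(cos θ - 1) • p.1 + sin θ • p.2‖ := by
        rw [ContinuousLinearMap.rotation_apply]
        congr 1
        module
    _ ≤ |cos θ - 1| * ‖p.1‖ + |sin θ| * ‖p.2‖ := by
        simpa [norm_smul] using norm_add_le ((cos θ - 1) • p.1) (sin θ • p.2)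
    _ ≤ |θ| * ‖p‖ + |θ| * ‖p‖ := by
        gcongr
        exacts [norm_fst_le p, norm_snd_le p]
    _ = 2 * |θ| * ‖p‖ := by ring

theorem hasDerivAt_fst_rotation (p : E × E) :
    HasDerivAt (fun θ ↦ (ContinuousLinearMap.rotation θ p).1) p.2 0 := by
  simpa [ContinuousLinearMap.rotation_apply] using
    ((hasDerivAt_cos 0).smul_const p.1).fun_add ((hasDerivAt_sin 0).smul_const p.2)

/-- The increment of `F` along the first of `N` equal steps of the quarter turn
`θ ↦ cos θ • p.1 + sin θ • p.2` from `p.1` to `p.2`, multiplied by `N`. -/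
noncomputable def rotationQuotient (F : E → ℝ) (N : ℕ) (p : E × E) : ℝ :=
  N * (F (ContinuousLinearMap.rotation (π / 2 / N) p).1 - F p.1)

theorem sub_eq_sum_rotationQuotient (F : E → ℝ) {N : ℕ} (hN : N ≠ 0) (p : E × E) :
    F p.2 - F p.1 = ∑ k ∈ Finset.range N,
      (N : ℝ)⁻¹ * rotationQuotient F N (ContinuousLinearMap.rotation (k * (π / 2 / N)) p) := by
  have hstep (k : ℕ) :
      (N : ℝ)⁻¹ * rotationQuotient F N (ContinuousLinearMap.rotation (k * (π / 2 / N)) p) =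
        F (ContinuousLinearMap.rotation ((k + 1 : ℕ) * (π / 2 / N)) p).1 -
          F (ContinuousLinearMap.rotation (k * (π / 2 / N)) p).1 := by
    rw [rotationQuotient, inv_mul_cancel_left₀ (by positivity), rotation_rotation_apply,
      Nat.cast_succ, add_one_mul, add_comm]
  rw [Finset.sum_congr rfl fun k _ ↦ hstep k, Finset.sum_range_sub fun k : ℕ ↦
    F (ContinuousLinearMap.rotation (k * (π / 2 / N)) p).1, mul_div_cancel₀ _ (by positivity)]
  simp [ContinuousLinearMap.rotation_apply]

theorem exp_sub_le_sum_exp_rotationQuotient (F : E → ℝ) {N : ℕ} (hN : N ≠ 0) (p : E × E) :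
    exp (F p.2 - F p.1) ≤ ∑ k ∈ Finset.range N, (N : ℝ)⁻¹ *
      exp (rotationQuotient F N (ContinuousLinearMap.rotation (k * (π / 2 / N)) p)) := by
  rw [sub_eq_sum_rotationQuotient F hN]
  exact convexOn_exp.map_sum_le (fun _ _ ↦ by positivity) (by simp [hN]) fun _ _ ↦ Set.mem_univ _

theorem continuous_rotationQuotient (hF : LipschitzWith K F) (N : ℕ) :
    Continuous (rotationQuotient F N) := by
  have := hF.continuous
  unfold rotationQuotient
  fun_prop

theorem abs_rotationQuotient_le (hF : LipschitzWith K F) (N : ℕ) (p : E × E) :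
    |rotationQuotient F N p| ≤ K * π * ‖p‖ := by
  rcases eq_or_ne N 0 with rfl | hN
  · simp only [rotationQuotient, Nat.cast_zero, zero_mul, abs_zero]
    positivity
  calc |rotationQuotient F N p|
      = N * dist (F (ContinuousLinearMap.rotation (π / 2 / N) p).1) (F p.1) := by
        rw [rotationQuotient, abs_mul, Nat.abs_cast, Real.dist_eq]
    _ ≤ N * (K * (2 * |π / 2 / N| * ‖p‖)) := by
        gcongr
        refine (hF.dist_le_mul _ _).trans ?_
        rw [dist_eq_norm]
        gcongr
        exact norm_fst_rotation_sub_le _ p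
    _ = K * π * ‖p‖ := by
        rw [abs_of_nonneg (by positivity)]
        field_simp

theorem norm_exp_rotationQuotient_le (hF : LipschitzWith K F) (N : ℕ) (p : E × E) :
    ‖exp (rotationQuotient F N p)‖ ≤ exp (K * π * ‖p‖) := by
  rw [norm_of_nonneg (exp_pos _).le]
  exact exp_le_exp.2 ((le_abs_self _).trans (abs_rotationQuotient_le hF N p))

theorem tendsto_rotationQuotient {p : E × E} (hF : DifferentiableAt ℝ F p.1) :
    Tendsto (fun N ↦ rotationQuotient F N p) atTop (𝓝 (π / 2 * fderiv ℝ F p.1 p.2)) := by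
  have hderiv : HasDerivAt (fun θ ↦ F (ContinuousLinearMap.rotation θ p).1)
      (fderiv ℝ F p.1 p.2) 0 := by
    have : HasFDerivAt F (fderiv ℝ F p.1) (ContinuousLinearMap.rotation 0 p).1 := by
      simpa only [rotation_zero_apply] using hF.hasFDerivAt
    exact this.comp_hasDerivAt 0 (hasDerivAt_fst_rotation p)
  have hstep : Tendsto (fun N : ℕ ↦ π / 2 / N) atTop (𝓝[≠] 0) :=
    tendsto_nhdsWithin_iff.2 ⟨tendsto_const_div_atTop_nhds_zero_nat _,
      (eventually_gt_atTop 0).mono fun N hN ↦ (by positivity : π / 2 / (N : ℝ) ≠ 0)⟩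
  refine ((hderiv.tendsto_slope_zero.comp hstep).const_mul (π / 2)).congr fun N ↦ ?_
  simp only [Function.comp_apply, zero_add, rotationQuotient, rotation_zero_apply, smul_eq_mul]
  field_simp

end RotationQuotient

section GaussianRotation

variable {E : Type*} [NormedAddCommGroup E] [NormedSpace ℝ E] [MeasurableSpace E] [BorelSpace E]
  [SecondCountableTopology E] [CompleteSpace E] {μ : Measure E} [IsGaussian μ]
  {K : ℝ≥0} {F : E → ℝ}

theorem integrable_exp_mul_norm (μ : Measure E) [IsGaussian μ] (c : ℝ) :
    Integrable (fun x ↦ exp (c * ‖x‖)) μ := by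
  obtain ⟨C, hC, hint⟩ := IsGaussian.exists_integrable_exp_sq μ
  refine (hint.const_mul (exp (c ^ 2 / (4 * C)))).mono' (by fun_prop) (.of_forall fun x ↦ ?_)
  have hsq : C * ‖x‖ ^ 2 + c ^ 2 / (4 * C) - c * ‖x‖ = (2 * C * ‖x‖ - c) ^ 2 / (4 * C) := by
    field_simp
    ring
  have : 0 ≤ (2 * C * ‖x‖ - c) ^ 2 / (4 * C) := by positivity
  rw [norm_of_nonneg (exp_pos _).le, ← exp_add]
  exact exp_le_exp.2 (by linarith)

theorem integrable_of_lipschitzWith (hF : LipschitzWith K F) : Integrable F μ := by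
  refine ((integrable_const |F 0|).add (IsGaussian.integrable_id.norm.const_mul (K : ℝ))).mono'
    hF.continuous.aestronglyMeasurable (.of_forall fun x ↦ ?_)
  calc ‖F x‖ ≤ ‖F 0‖ + ‖F x - F 0‖ := norm_le_insert' _ _
    _ ≤ |F 0| + K * ‖x‖ := by simpa using hF.norm_sub_le x 0

theorem integrable_exp_of_lipschitzWith (hF : LipschitzWith K F) :
    Integrable (fun x ↦ exp (F x)) μ := by
  refine ((integrable_exp_mul_norm μ K).const_mul (exp (F 0))).mono'
    (measurable_exp.comp hF.continuous.measurable).aestronglyMeasurable (.of_forall fun x ↦ ?_)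
  have : F x - F 0 ≤ K * ‖x‖ := by
    simpa [Real.dist_eq] using (le_abs_self _).trans (hF.dist_le_mul x 0)
  rw [norm_of_nonneg (exp_pos _).le, ← exp_add]
  exact exp_le_exp.2 (by linarith)

theorem integrable_exp_rotationQuotient (hF : LipschitzWith K F) (N : ℕ) :
    Integrable (fun p ↦ exp (rotationQuotient F N p)) (μ.prod μ) :=
  (integrable_exp_mul_norm (μ.prod μ) (K * π)).mono'
    (continuous_exp.comp (continuous_rotationQuotient hF N)).aestronglyMeasurable
    (.of_forall (norm_exp_rotationQuotient_le hF N))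

theorem integral_exp_sub_le_integral_exp_rotationQuotient (hμ : μ[id] = 0)
    (hF : LipschitzWith K F) {N : ℕ} (hN : N ≠ 0) :
    ∫ p, exp (F p.2 - F p.1) ∂(μ.prod μ) ≤ ∫ p, exp (rotationQuotient F N p) ∂(μ.prod μ) := by
  set R : ℕ → E × E →L[ℝ] E × E := fun k ↦ ContinuousLinearMap.rotation (k * (π / 2 / N))
  set G : E × E → ℝ := fun p ↦ exp (rotationQuotient F N p)
  have hR (k : ℕ) : MeasurePreserving (R k) (μ.prod μ) (μ.prod μ) :=
    ⟨by fun_prop, IsGaussian.map_rotation_eq_self hμ _⟩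
  have hG : Integrable G (μ.prod μ) := integrable_exp_rotationQuotient hF N
  have hGR (k : ℕ) : Integrable (fun p ↦ (N : ℝ)⁻¹ * G (R k p)) (μ.prod μ) :=
    ((hR k).integrable_comp_of_integrable hG).const_mul _
  have hinv (k : ℕ) : ∫ p, G (R k p) ∂(μ.prod μ) = ∫ p, G p ∂(μ.prod μ) := by
    rw [← integral_map (hR k).aemeasurable (by rw [(hR k).map_eq]; exact hG.1), (hR k).map_eq]
  calc ∫ p, exp (F p.2 - F p.1) ∂(μ.prod μ)
      ≤ ∫ p, ∑ k ∈ Finset.range N, (N : ℝ)⁻¹ * G (R k p) ∂(μ.prod μ) :=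
        integral_mono_of_nonneg (.of_forall fun p ↦ (exp_pos _).le)
          (integrable_finsetSum _ fun k _ ↦ hGR k)
          (.of_forall (exp_sub_le_sum_exp_rotationQuotient F hN))
    _ = ∑ _ ∈ Finset.range N, (N : ℝ)⁻¹ * ∫ p, G p ∂(μ.prod μ) := by
        simp only [integral_finsetSum _ fun k _ ↦ hGR k, integral_const_mul, hinv]
    _ = ∫ p, G p ∂(μ.prod μ) := by simp [hN]

theorem integrable_exp_mul_fderiv (hF : LipschitzWith K F) (c : ℝ) :
    Integrable (fun p : E × E ↦ exp (c * fderiv ℝ F p.1 p.2)) (μ.prod μ) := by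
  have hmeas : Measurable fun p : E × E ↦ fderiv ℝ F p.1 p.2 :=
    (ContinuousLinearMap.measurable_apply₂ (𝕜 := ℝ)).comp
      (((measurable_fderiv ℝ F).comp measurable_fst).prodMk measurable_snd)
  refine (integrable_exp_mul_norm _ (|c| * K)).mono' (by fun_prop) (.of_forall fun p ↦ ?_)
  rw [norm_of_nonneg (exp_pos _).le]
  refine exp_le_exp.2 ?_
  calc c * fderiv ℝ F p.1 p.2 ≤ |c| * ‖fderiv ℝ F p.1 p.2‖ :=
        (le_abs_self _).trans_eq (abs_mul _ _)
    _ ≤ |c| * (K * ‖p‖) := by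
        gcongr
        exact (fderiv ℝ F p.1).le_of_opNorm_le_of_le (norm_fderiv_le_of_lipschitz ℝ hF)
          (norm_snd_le p)
    _ = |c| * K * ‖p‖ := (mul_assoc _ _ _).symm

theorem integral_exp_sub_le_integral_exp_fderiv (hμ : μ[id] = 0) (hF : LipschitzWith K F)
    (hdiff : ∀ᵐ x ∂μ, DifferentiableAt ℝ F x) :
    ∫ p, exp (F p.2 - F p.1) ∂(μ.prod μ) ≤
      ∫ p, exp (π / 2 * fderiv ℝ F p.1 p.2) ∂(μ.prod μ) := by
  refine ge_of_tendsto ?_ ((eventually_ne_atTop 0).mono fun N hN ↦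
    integral_exp_sub_le_integral_exp_rotationQuotient hμ hF hN)
  refine tendsto_integral_of_dominated_convergence (fun p ↦ exp (K * π * ‖p‖))
    (fun N ↦ (integrable_exp_rotationQuotient hF N).1) (integrable_exp_mul_norm _ _)
    (fun N ↦ .of_forall (norm_exp_rotationQuotient_le hF N)) ?_
  filter_upwards [Measure.quasiMeasurePreserving_fst.ae hdiff] with p hp
  exact (continuous_exp.tendsto _).comp (tendsto_rotationQuotient hp)

end GaussianRotation

theorem pi_fin_absolutelyContinuous {n : ℕ} {X : Fin n → Type*} [∀ i, MeasurableSpace (X i)]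
    {μ ν : ∀ i, Measure (X i)} [∀ i, SigmaFinite (μ i)] [∀ i, SigmaFinite (ν i)]
    (h : ∀ i, μ i ≪ ν i) : Measure.pi μ ≪ Measure.pi ν := by
  induction n with
  | zero => rw [Measure.pi_of_empty μ, Measure.pi_of_empty ν]
  | succ n ih =>
    rw [← (measurePreserving_piFinSuccAbove μ 0).symm.map_eq,
      ← (measurePreserving_piFinSuccAbove ν 0).symm.map_eq]
    exact ((h 0).prod (ih fun i ↦ h _)).map (MeasurableEquiv.measurable _)

theorem pi_absolutelyContinuous {ι : Type*} [Fintype ι] {X : ι → Type*}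
    [∀ i, MeasurableSpace (X i)] {μ ν : ∀ i, Measure (X i)} [∀ i, SigmaFinite (μ i)]
    [∀ i, SigmaFinite (ν i)] (h : ∀ i, μ i ≪ ν i) : Measure.pi μ ≪ Measure.pi ν := by
  let e := (Fintype.equivFin ι).symm
  rw [← (measurePreserving_piCongrLeft μ e).map_eq, ← (measurePreserving_piCongrLeft ν e).map_eq]
  exact (pi_fin_absolutelyContinuous fun i ↦ h (e i)).map (MeasurableEquiv.measurable _)

theorem integral_abs_gaussianReal : ∫ x, |x| ∂(gaussianReal 0 1) = √(2 / π) := by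
  have hhalf : ∫ x in Set.Ioi (0 : ℝ), x * exp (-(1 / 2) * x ^ 2) = 1 := by
    have := integral_rpow_mul_exp_neg_mul_rpow (p := 2) (q := 1) (b := 1 / 2) two_pos
      (by norm_num) one_half_pos
    simp only [rpow_one, rpow_two] at this
    rw [this]
    norm_num [Real.rpow_neg_one]
  have hdensity (x : ℝ) :
      gaussianPDFReal 0 1 x • |x| = (√(2 * π))⁻¹ * (|x| * exp (-(1 / 2) * |x| ^ 2)) := by
    rw [gaussianPDFReal, smul_eq_mul, sq_abs, NNReal.coe_one, mul_one, sub_zero]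
    ring_nf
  simp only [integral_gaussianReal_eq_integral_smul one_ne_zero, hdensity, integral_const_mul]
  rw [integral_comp_abs (f := fun x ↦ x * exp (-(1 / 2) * x ^ 2)), hhalf, sqrt_mul zero_le_two,
    sqrt_div zero_le_two]
  field_simp
  norm_num

theorem sum_abs_inner_le_sqrt_card_mul_norm {ι E : Type*} [Fintype ι] [NormedAddCommGroup E]
    [InnerProductSpace ℝ E] (b : OrthonormalBasis ι ℝ E) (x : E) :
    ∑ i, |⟪b i, x⟫| ≤ √(Fintype.card ι) * ‖x‖ := by
  have hsq : (∑ i, |⟪b i, x⟫|) ^ 2 ≤ Fintype.card ι * ‖x‖ ^ 2 := by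
    simpa only [sq_abs, b.sum_sq_inner_right, Finset.card_univ] using
      sq_sum_le_card_mul_sum_sq (s := Finset.univ) (f := fun i ↦ |⟪b i, x⟫|)
  simpa using le_sqrt_of_sq_le hsq

section StdGaussian

variable {E : Type*} [NormedAddCommGroup E] [InnerProductSpace ℝ E] [FiniteDimensional ℝ E]
  [MeasurableSpace E] [BorelSpace E] {K : ℝ≥0} {F : E → ℝ}

theorem stdGaussian_absolutelyContinuous : stdGaussian E ≪ volume := by
  let b := stdOrthonormalBasis ℝ E
  have hcomp : (fun x : Fin (Module.finrank ℝ E) → ℝ ↦ ∑ i, x i • b i) =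
      b.repr.symm ∘ WithLp.toLp 2 :=
    funext fun x ↦ b.sum_repr_symm (WithLp.toLp 2 x)
  have hb : MeasurePreserving (fun x : Fin (Module.finrank ℝ E) → ℝ ↦ ∑ i, x i • b i) :=
    hcomp ▸ b.measurePreserving_repr_symm.comp (PiLp.volume_preserving_toLp _)
  rw [stdGaussian, ← hb.map_eq]
  exact (pi_absolutelyContinuous fun _ ↦
    gaussianReal_absolutelyContinuous 0 one_ne_zero).map hb.measurable

theorem map_strongDual_stdGaussian (L : StrongDual ℝ E) :
    (stdGaussian E).map L = gaussianReal 0 (‖L‖₊ ^ 2) := by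
  rw [IsGaussian.map_eq_gaussianReal, integral_strongDual_stdGaussian, variance_dual_stdGaussian,
    ← coe_nnnorm, ← NNReal.coe_pow, Real.toNNReal_coe]

theorem integral_exp_mul_strongDual_stdGaussian (c : ℝ) (L : StrongDual ℝ E) :
    ∫ y, exp (c * L y) ∂(stdGaussian E) = exp (‖L‖ ^ 2 * c ^ 2 / 2) := by
  have := mgf_gaussianReal (map_strongDual_stdGaussian L) c
  simpa [mgf] using this

theorem integral_exp_sub_stdGaussian_le (hF : LipschitzWith K F) :
    ∫ p, exp (F p.2 - F p.1) ∂((stdGaussian E).prod (stdGaussian E)) ≤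
      exp ((π / 2 * K) ^ 2 / 2) := by
  refine (integral_exp_sub_le_integral_exp_fderiv integral_id_stdGaussian hF
    (stdGaussian_absolutelyContinuous.ae_le hF.ae_differentiableAt)).trans ?_
  rw [integral_prod _ (integrable_exp_mul_fderiv hF _)]
  simp only [integral_exp_mul_strongDual_stdGaussian]
  calc ∫ x, exp (‖fderiv ℝ F x‖ ^ 2 * (π / 2) ^ 2 / 2) ∂(stdGaussian E)
      ≤ ∫ _, exp ((π / 2 * K) ^ 2 / 2) ∂(stdGaussian E) := by
        refine integral_mono_of_nonneg (.of_forall fun _ ↦ (exp_pos _).le) (integrable_const _)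
          (.of_forall fun x ↦ exp_le_exp.2 ?_)
        rw [mul_pow, mul_comm]
        gcongr
        exact norm_fderiv_le_of_lipschitz ℝ hF
    _ = exp ((π / 2 * K) ^ 2 / 2) := by simp

theorem integral_exp_sub_integral_stdGaussian_le (hF : LipschitzWith K F) :
    ∫ x, exp (F x - ∫ y, F y ∂(stdGaussian E)) ∂(stdGaussian E) ≤
      exp ((π / 2 * K) ^ 2 / 2) := by
  set γ := stdGaussian E
  have hjensen : exp (∫ y, -F y ∂γ) ≤ ∫ y, exp (-F y) ∂γ :=
    convexOn_exp.map_integral_le continuousOn_exp isClosed_univ (.of_forall fun _ ↦ Set.mem_univ _)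
      (integrable_of_lipschitzWith hF).neg (integrable_exp_of_lipschitzWith hF.neg)
  calc ∫ x, exp (F x - ∫ y, F y ∂γ) ∂γ
      = exp (∫ y, -F y ∂γ) * ∫ x, exp (F x) ∂γ := by
        simp only [sub_eq_neg_add, exp_add, integral_const_mul, integral_neg]
    _ ≤ (∫ y, exp (-F y) ∂γ) * ∫ x, exp (F x) ∂γ := by gcongr
    _ = ∫ p, exp (F p.2 - F p.1) ∂(γ.prod γ) := by
        simp only [sub_eq_neg_add, exp_add]
        exact (integral_prod_mul _ _).symm
    _ ≤ exp ((π / 2 * K) ^ 2 / 2) := integral_exp_sub_stdGaussian_le hF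

theorem hasSubgaussianMGF_sub_integral_stdGaussian (hF : LipschitzWith K F) :
    HasSubgaussianMGF (fun x ↦ F x - ∫ y, F y ∂(stdGaussian E)) ((NNReal.pi / 2 * K) ^ 2)
      (stdGaussian E) where
  integrable_exp_mul t := integrable_exp_of_lipschitzWith
    ((lipschitzWith_smul t).comp (hF.sub (.const _)))
  mgf_le t := by
    have htF : LipschitzWith (‖t‖₊ * K) fun x ↦ t * F x := (lipschitzWith_smul t).comp hF
    have := integral_exp_sub_integral_stdGaussian_le htF
    simp only [mgf, mul_sub, integral_const_mul] at this ⊢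
    refine this.trans_eq ?_
    congr 2
    rw [← sq_abs t]
    push_cast [NNReal.coe_real_pi, Real.norm_eq_abs]
    ring

theorem integral_abs_inner_stdGaussian {v : E} (hv : ‖v‖ = 1) :
    ∫ x, |⟪v, x⟫| ∂(stdGaussian E) = √(2 / π) := by
  have hmap : (stdGaussian E).map (innerSL ℝ v) = gaussianReal 0 1 := by
    rw [map_strongDual_stdGaussian, ← norm_toNNReal, innerSL_apply_norm, hv, toNNReal_one,
      one_pow]
  rw [← integral_abs_gaussianReal, ← hmap, integral_map (by fun_prop) (by fun_prop)]
  simp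

theorem sqrt_finrank_mul_le_integral_norm_stdGaussian :
    √(Module.finrank ℝ E) * √(2 / π) ≤ ∫ x, ‖x‖ ∂(stdGaussian E) := by
  let b := stdOrthonormalBasis ℝ E
  calc √(Module.finrank ℝ E) * √(2 / π)
      = (∑ i, ∫ x, |⟪b i, x⟫| ∂(stdGaussian E)) / √(Module.finrank ℝ E) := by
        simp only [integral_abs_inner_stdGaussian (b.norm_eq_one _), Finset.sum_const,
          Finset.card_univ, Fintype.card_fin, nsmul_eq_mul]
        rw [mul_div_right_comm, div_sqrt]
    _ = ∫ x, (∑ i, |⟪b i, x⟫|) / √(Module.finrank ℝ E) ∂(stdGaussian E) := by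
        rw [integral_div, integral_finsetSum]
        exact fun i _ ↦ (IsGaussian.integrable_id.const_inner (b i)).abs
    _ ≤ ∫ x, ‖x‖ ∂(stdGaussian E) := by
        refine integral_mono_of_nonneg (.of_forall fun x ↦ by positivity)
          IsGaussian.integrable_id.norm (.of_forall fun x ↦ ?_)
        refine div_le_of_le_mul₀ (sqrt_nonneg _) (norm_nonneg x) ?_
        simpa [mul_comm] using sum_abs_inner_le_sqrt_card_mul_norm b x

end StdGaussian

section HomExt

variable {E : Type*} [NormedAddCommGroup E] [InnerProductSpace ℝ E]

/-- The positively homogeneous extension of degree one of a function on the unit sphere. At the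
origin, where `normalize` takes the value `0`, it vanishes. -/
noncomputable def homExt (g : sphere (0 : E) 1 → ℝ) (y : E) : ℝ :=
  ‖y‖ * Function.extend Subtype.val g 0 (NormedSpace.normalize y)

theorem homExt_smul (g : sphere (0 : E) 1 → ℝ) {r : ℝ} (hr : 0 ≤ r) (v : sphere (0 : E) 1) :
    homExt g (r • (v : E)) = r * g v := by
  rcases hr.eq_or_lt with rfl | hr
  · simp [homExt]
  · rw [homExt, NormedSpace.normalize_smul_of_pos hr,
      NormedSpace.normalize_eq_self_of_norm_eq_one (norm_eq_of_mem_sphere v),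
      Subtype.val_injective.extend_apply, norm_smul, norm_eq_of_mem_sphere, mul_one,
      norm_of_nonneg hr.le]

theorem exists_eq_smul_sphere [Nonempty (sphere (0 : E) 1)] (x : E) :
    ∃ r : ℝ, 0 ≤ r ∧ ∃ v : sphere (0 : E) 1, x = r • (v : E) := by
  rcases eq_or_ne x 0 with rfl | hx
  · exact ⟨0, le_rfl, Classical.arbitrary _, (zero_smul ℝ _).symm⟩
  · exact ⟨‖x‖, norm_nonneg x,
      ⟨NormedSpace.normalize x, mem_sphere_zero_iff_norm.2 (NormedSpace.norm_normalize hx)⟩,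
      (NormedSpace.norm_smul_normalize x).symm⟩

theorem mul_norm_sub_le_norm_smul_sub_smul {r s : ℝ} (hr : 0 ≤ r) (hrs : r ≤ s) {v w : E}
    (hv : ‖v‖ = 1) (hw : ‖w‖ = 1) : r * ‖v - w‖ ≤ ‖r • v - s • w‖ := by
  refine (pow_le_pow_iff_left₀ (by positivity) (norm_nonneg _) two_ne_zero).1 ?_
  have hvw : ⟪v, w⟫ ≤ 1 := by simpa [hv, hw] using real_inner_le_norm v w
  rw [mul_pow, norm_sub_sq_real, norm_sub_sq_real, norm_smul, norm_smul, real_inner_smul_left,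
    real_inner_smul_right, hv, hw, norm_of_nonneg hr, norm_of_nonneg (hr.trans hrs)]
  nlinarith [mul_nonneg (mul_nonneg hr (sub_nonneg.2 hrs)) (sub_nonneg.2 hvw), sq_nonneg (r - s)]

theorem lipschitzWith_homExt [Nonempty (sphere (0 : E) 1)] {g : sphere (0 : E) 1 → ℝ}
    {K C : ℝ≥0} (hg : LipschitzWith K g) (hgC : ∀ v, |g v| ≤ C) :
    LipschitzWith (K + C) (homExt g) := by
  have hle {r s : ℝ} (hr : 0 ≤ r) (hrs : r ≤ s) (v w : sphere (0 : E) 1) :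
      |r * g v - s * g w| ≤ (K + C) * ‖r • (v : E) - s • (w : E)‖ := by
    have hradial : s - r ≤ ‖r • (v : E) - s • (w : E)‖ := by
      have := norm_sub_norm_le (s • (w : E)) (r • (v : E))
      rwa [norm_smul, norm_smul, norm_eq_of_mem_sphere, norm_eq_of_mem_sphere, mul_one, mul_one,
        norm_of_nonneg hr, norm_of_nonneg (hr.trans hrs), norm_sub_rev] at this
    calc |r * g v - s * g w| = |r * (g v - g w) - (s - r) * g w| := by congr 1; ring
      _ ≤ r * |g v - g w| + (s - r) * |g w| := by
          refine (abs_sub _ _).trans_eq ?_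
          rw [abs_mul, abs_mul, abs_of_nonneg hr, abs_of_nonneg (sub_nonneg.2 hrs)]
      _ ≤ r * (K * ‖(v : E) - w‖) + (s - r) * C := by
          gcongr
          · simpa only [Subtype.dist_eq, dist_eq_norm, Real.norm_eq_abs] using hg.dist_le_mul v w
          · exact hgC w
      _ = K * (r * ‖(v : E) - w‖) + C * (s - r) := by ring
      _ ≤ K * ‖r • (v : E) - s • (w : E)‖ + C * ‖r • (v : E) - s • (w : E)‖ := by
          gcongr
          exact mul_norm_sub_le_norm_smul_sub_smul hr hrs (norm_eq_of_mem_sphere v)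
            (norm_eq_of_mem_sphere w)
      _ = (K + C) * ‖r • (v : E) - s • (w : E)‖ := by ring
  refine .of_dist_le_mul fun x y ↦ ?_
  obtain ⟨r, hr, v, rfl⟩ := exists_eq_smul_sphere x
  obtain ⟨s, hs, w, rfl⟩ := exists_eq_smul_sphere y
  rw [homExt_smul g hr, homExt_smul g hs, Real.dist_eq, dist_eq_norm, NNReal.coe_add]
  rcases le_total r s with hrs | hsr
  · exact hle hr hrs v w
  · rw [abs_sub_comm, norm_sub_rev]
    exact hle hs hsr w v

end HomExt

section SphereMeasure

variable {E : Type*} [NormedAddCommGroup E] [InnerProductSpace ℝ E] [MeasurableSpace E]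
  [BorelSpace E] {σ : Measure (sphere (0 : E) 1)}

/-- Invariance of a measure on the unit sphere under the full orthogonal group, reflections
included. -/
def IsRotationInvariant (σ : Measure (sphere (0 : E) 1)) : Prop :=
  ∀ O : E ≃ₗᵢ[ℝ] E, σ.map (fun v : sphere (0 : E) 1 ↦ (⟨O v, by simp⟩ : sphere (0 : E) 1)) = σ

variable [FiniteDimensional ℝ E]

theorem IsRotationInvariant.charFun_eq_of_norm_eq (hσ : IsRotationInvariant σ) {s t : E}
    (h : ‖s‖ = ‖t‖) : charFun (σ.map (↑)) s = charFun (σ.map (↑)) t := by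
  let O : E ≃ₗᵢ[ℝ] E := Submodule.reflection (Submodule.span ℝ {s - t})ᗮ
  have hO : O s = t := Submodule.reflection_sub h
  have hmap : (σ.map ((↑) : _ → E)).map O = σ.map (↑) := by
    nth_rw 2 [← hσ O]
    rw [Measure.map_map (by fun_prop) (by fun_prop), Measure.map_map (by fun_prop) (by fun_prop)]
    rfl
  calc charFun (σ.map (↑)) s = charFun ((σ.map ((↑) : _ → E)).map O) (O s) := by
        rw [charFun_apply, charFun_apply, integral_map (φ := O) (by fun_prop) (by fun_prop)]
        simp only [O.inner_map_map]
    _ = charFun (σ.map (↑)) t := by rw [hmap, hO]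

theorem IsRotationInvariant.measurePreserving_norm_smul (hσ : IsRotationInvariant σ)
    [IsProbabilityMeasure σ] :
    MeasurePreserving (fun p : E × sphere (0 : E) 1 ↦ ‖p.1‖ • (p.2 : E))
      ((stdGaussian E).prod σ) (stdGaussian E) := by
  set γ := stdGaussian E
  have hmeas : Measurable fun p : E × sphere (0 : E) 1 ↦ ‖p.1‖ • (p.2 : E) := by fun_prop
  have : IsProbabilityMeasure ((γ.prod σ).map fun p ↦ ‖p.1‖ • (p.2 : E)) :=
    Measure.isProbabilityMeasure_map hmeas.aemeasurable
  have hint (g : E × sphere (0 : E) 1 → ℝ) (hg : Measurable g) :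
      Integrable (fun p ↦ Complex.exp (g p * Complex.I)) (γ.prod σ) :=
    .of_bound (by fun_prop) 1 (.of_forall fun p ↦ (Complex.norm_exp_ofReal_mul_I _).le)
  have hσchar (r : ℝ) (y : E) :
      ∫ v : sphere (0 : E) 1, Complex.exp ((r * ⟪(v : E), y⟫ : ℝ) * Complex.I) ∂σ =
        charFun (σ.map (↑)) (r • y) := by
    rw [charFun_apply, integral_map (by fun_prop) (by fun_prop)]
    simp only [real_inner_smul_right]
  have hγchar (v : sphere (0 : E) 1) (r : ℝ) :
      ∫ x, Complex.exp ((r * ⟪(v : E), x⟫ : ℝ) * Complex.I) ∂γ = Complex.exp (-r ^ 2 / 2) := by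
    have := charFun_stdGaussian (r • (v : E))
    simpa only [charFun_apply, real_inner_smul_right, real_inner_comm, norm_smul,
      norm_eq_of_mem_sphere, mul_one, norm_eq_abs, ← Complex.ofReal_pow, sq_abs] using this
  refine ⟨hmeas, Measure.ext_of_charFun (funext fun t ↦ ?_)⟩
  calc charFun ((γ.prod σ).map fun p ↦ ‖p.1‖ • (p.2 : E)) t
      = ∫ x, ∫ v : sphere (0 : E) 1, Complex.exp ((‖x‖ * ⟪(v : E), t⟫ : ℝ) * Complex.I) ∂σ ∂γ := by
        rw [charFun_apply, integral_map hmeas.aemeasurable (by fun_prop)]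
        simp only [real_inner_smul_left]
        exact integral_prod _ (hint _ (by fun_prop))
    _ = ∫ x, ∫ v : sphere (0 : E) 1, Complex.exp ((‖t‖ * ⟪(v : E), x⟫ : ℝ) * Complex.I) ∂σ ∂γ := by
        -- By rotation invariance, the inner integral depends only on `‖x‖ * ‖t‖`.
        simp only [hσchar]
        refine integral_congr_ae (.of_forall fun x ↦ hσ.charFun_eq_of_norm_eq ?_)
        simp only [norm_smul, norm_norm, mul_comm]
    _ = ∫ v : sphere (0 : E) 1, ∫ x, Complex.exp ((‖t‖ * ⟪(v : E), x⟫ : ℝ) * Complex.I) ∂γ ∂σ :=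
        integral_integral_swap (hint (fun p ↦ ‖t‖ * ⟪(p.2 : E), p.1⟫) (by fun_prop))
    _ = charFun γ t := by
        simp only [hγchar, integral_const, probReal_univ, one_smul, γ, charFun_stdGaussian]

theorem IsRotationInvariant.integral_homExt_stdGaussian (hσ : IsRotationInvariant σ)
    [IsProbabilityMeasure σ] {g : sphere (0 : E) 1 → ℝ}
    (hg : AEStronglyMeasurable (homExt g) (stdGaussian E)) :
    ∫ y, homExt g y ∂(stdGaussian E) = (∫ x, ‖x‖ ∂(stdGaussian E)) * ∫ v, g v ∂σ := by
  have hpolar := hσ.measurePreserving_norm_smul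
  rw [← hpolar.map_eq] at hg
  calc ∫ y, homExt g y ∂(stdGaussian E)
      = ∫ p : E × sphere (0 : E) 1, homExt g (‖p.1‖ • (p.2 : E)) ∂((stdGaussian E).prod σ) := by
        rw [← integral_map hpolar.aemeasurable hg, hpolar.map_eq]
    _ = ∫ p : E × sphere (0 : E) 1, ‖p.1‖ * g p.2 ∂((stdGaussian E).prod σ) := by
        simp only [homExt_smul g (norm_nonneg _)]
    _ = (∫ x, ‖x‖ ∂(stdGaussian E)) * ∫ v, g v ∂σ := integral_prod_mul _ _

theorem IsRotationInvariant.hasSubgaussianMGF_of_abs_le (hσ : IsRotationInvariant σ)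
    [IsProbabilityMeasure σ] {g : sphere (0 : E) 1 → ℝ} {K C : ℝ≥0} (hg : LipschitzWith K g)
    (hgC : ∀ v, |g v| ≤ C) :
    HasSubgaussianMGF (fun v ↦ (∫ x, ‖x‖ ∂(stdGaussian E)) * (g v - ∫ w, g w ∂σ))
      ((NNReal.pi / 2 * (K + C)) ^ 2) σ := by
  have := nonempty_of_isProbabilityMeasure σ
  have hpolar := hσ.measurePreserving_norm_smul
  have hext : LipschitzWith (K + C) (homExt g) := lipschitzWith_homExt hg hgC
  have hγ : HasSubgaussianMGF (fun y ↦ homExt g y - (∫ x, ‖x‖ ∂(stdGaussian E)) * ∫ w, g w ∂σ)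
      ((NNReal.pi / 2 * (K + C)) ^ 2)
      (((stdGaussian E).prod σ).map fun p ↦ ‖p.1‖ • (p.2 : E)) := by
    rw [hpolar.map_eq, ← hσ.integral_homExt_stdGaussian hext.continuous.aestronglyMeasurable]
    exact hasSubgaussianMGF_sub_integral_stdGaussian hext
  have hmean := hasSubgaussianMGF_integral_fst (hγ.of_map hpolar.aemeasurable)
  simp only [Function.comp_apply, homExt_smul g (norm_nonneg _)] at hmean
  convert hmean using 2 with v
  have hnorm : Integrable (fun x : E ↦ ‖x‖) (stdGaussian E) := IsGaussian.integrable_id.norm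
  rw [integral_sub (hnorm.mul_const _) (integrable_const _),
    integral_mul_const, integral_const, probReal_univ, one_smul, mul_sub]

theorem IsRotationInvariant.hasSubgaussianMGF_of_lipschitzWith (hσ : IsRotationInvariant σ)
    [IsProbabilityMeasure σ] {f : sphere (0 : E) 1 → ℝ} {K : ℝ≥0} (hf : LipschitzWith K f) :
    HasSubgaussianMGF (fun v ↦ (∫ x, ‖x‖ ∂(stdGaussian E)) * (f v - ∫ w, f w ∂σ))
      ((NNReal.pi / 2 * (3 * K)) ^ 2) σ := by
  obtain ⟨u⟩ := nonempty_of_isProbabilityMeasure σ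
  have hfσ : Integrable f σ :=
    hf.continuous.integrable_of_hasCompactSupport (HasCompactSupport.of_compactSpace f)
  have hbound (v : sphere (0 : E) 1) : |f v - f u| ≤ (2 * K : ℝ≥0) := by
    have hdiam : dist v u ≤ 2 := by
      simpa [one_add_one_eq_two, Subtype.dist_eq] using dist_le_norm_add_norm (v : E) u
    calc |f v - f u| ≤ K * dist v u := hf.dist_le_mul v u
      _ ≤ (2 * K : ℝ≥0) := by
          rw [NNReal.coe_mul, NNReal.coe_ofNat, mul_comm]
          gcongr
  have := hσ.hasSubgaussianMGF_of_abs_le (hf.sub (.const (f u))) hbound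
  rwa [show K + 0 + 2 * K = 3 * K by ring, integral_sub hfσ (integrable_const _), integral_const,
    probReal_univ, one_smul, funext fun v ↦ congrArg _ (sub_sub_sub_cancel_right _ _ _)] at this

theorem levys_lemma_general [IsProbabilityMeasure σ] (hσ : IsRotationInvariant σ)
    {f : sphere (0 : E) 1 → ℝ} {K : ℝ≥0} (hK : 0 < K) (hf : LipschitzWith K f) {ε : ℝ}
    (hε : 0 ≤ ε) :
    σ.real {v | ε ≤ |f v - ∫ w, f w ∂σ|} ≤
      2 * exp (-(4 * Module.finrank ℝ E * ε ^ 2) / (9 * π ^ 3 * K ^ 2)) := by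
  set m := ∫ x : E, ‖x‖ ∂(stdGaussian E)
  have hm : 0 ≤ m := integral_nonneg fun x ↦ norm_nonneg x
  have hfinrank : Module.finrank ℝ E * (2 / π) ≤ m ^ 2 := by
    rw [← sqrt_le_left hm, sqrt_mul (Nat.cast_nonneg _)]
    exact sqrt_finrank_mul_le_integral_norm_stdGaussian
  have hsubset : {v | ε ≤ |f v - ∫ w, f w ∂σ|} ⊆ {v | m * ε ≤ |m * (f v - ∫ w, f w ∂σ)|} := by
    intro v hv
    rw [Set.mem_ofPred_eq, abs_mul, abs_of_nonneg hm]
    exact mul_le_mul_of_nonneg_left hv hm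
  calc σ.real {v | ε ≤ |f v - ∫ w, f w ∂σ|}
      ≤ σ.real {v | m * ε ≤ |m * (f v - ∫ w, f w ∂σ)|} := measureReal_mono hsubset
    _ ≤ 2 * exp (-(m * ε) ^ 2 / (2 * ((NNReal.pi / 2 * (3 * K)) ^ 2 : ℝ≥0))) :=
        measureReal_le_abs_le_of_hasSubgaussianMGF (hσ.hasSubgaussianMGF_of_lipschitzWith hf)
          (mul_nonneg hm hε)
    _ = 2 * exp (-(2 * m ^ 2 * ε ^ 2) / (9 * π ^ 2 * K ^ 2)) := by
        push_cast [NNReal.coe_real_pi]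
        congr 2
        field_simp
        ring
    _ ≤ 2 * exp (-(2 * (Module.finrank ℝ E * (2 / π)) * ε ^ 2) / (9 * π ^ 2 * K ^ 2)) := by
        gcongr
    _ = 2 * exp (-(4 * Module.finrank ℝ E * ε ^ 2) / (9 * π ^ 3 * K ^ 2)) := by
        congr 2
        field_simp
        ring

end SphereMeasure

end Concentration

/-- **Lévy's lemma.** Let `σ` be the uniform (i.e. rotation-invariant) Borel probability
measure on the unit sphere `S^{2D−1} ⊂ ℝ^{2D}`, and let `f` be an `η`-Lipschitz real function
on the sphere. Then `σ({v : |f(v) − ∫ f dσ| ≥ ε}) ≤ 2 exp(−2Dε²/(9π³η²))` for all `ε > 0`. -/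
theorem levys_lemma (D : ℕ) (hD : 1 ≤ D)
    (σ : Measure (sphere (0 : EuclideanSpace ℝ (Fin (2 * D))) 1)) [IsProbabilityMeasure σ]
    (hσ : ∀ O : EuclideanSpace ℝ (Fin (2 * D)) ≃ₗᵢ[ℝ] EuclideanSpace ℝ (Fin (2 * D)),
      σ.map (fun v : sphere (0 : EuclideanSpace ℝ (Fin (2 * D))) 1 =>
        (⟨O v, by
          have hv : ‖(v : EuclideanSpace ℝ (Fin (2 * D)))‖ = 1 := by
            have := v.2; simp only [mem_sphere_iff_norm, sub_zero] at this; exact this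
          simp [mem_sphere_iff_norm, O.norm_map, hv]⟩ :
          sphere (0 : EuclideanSpace ℝ (Fin (2 * D))) 1)) = σ)
    (f : sphere (0 : EuclideanSpace ℝ (Fin (2 * D))) 1 → ℝ) (η : ℝ) (hη : 0 < η)
    (hf : ∀ v w : sphere (0 : EuclideanSpace ℝ (Fin (2 * D))) 1,
      |f v - f w| ≤ η * dist v w)
    (ε : ℝ) (hε : 0 < ε) :
    σ {v | ε ≤ |f v - ∫ w, f w ∂σ|}
      ≤ ENNReal.ofReal (2 * Real.exp (-(2 * D * ε ^ 2) / (9 * Real.pi ^ 3 * η ^ 2))) := by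
  lift η to NNReal using hη.le
  have hlip : LipschitzWith η f := .of_dist_le_mul hf
  rw [← ofReal_measureReal]
  refine ENNReal.ofReal_le_ofReal ((levys_lemma_general hσ hη hlip hε.le).trans ?_)
  rw [finrank_euclideanSpace_fin]
  gcongr
  · norm_num
  · lia
end
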